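/- arXiv:2403.16589 — 2 statements merged into one kernel-verified Lean document; each statement's English description precedes it below -/
import Mathlib

section
/- There exists a constant C > 0 such that for all n ≥ 1, the number of sumsets in F₂ⁿ satisfies |𝒮ₙ| ≤ 2^(2^(n−1) + n² + C). -/
open Pointwise

/-- `V n` is the vector space `F₂ⁿ`. -/
abbrev V (n : ℕ) : Type := Fin n → ZMod 2

/-- `𝒮ₙ`: the family of sumsets `A + A` for `A ⊆ F₂ⁿ`. -/
def sumsets (n : ℕ) : Finset (Finset (V n)) :=
  Finset.image (fun A : Finset (V n) => A + A) Finset.univ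


namespace SC
open Finset

noncomputable def chi {n : ℕ} (u x : V n) : ℝ := if u ⬝ᵥ x = 0 then 1 else -1

lemma chi_comm {n : ℕ} (u x : V n) : chi u x = chi x u := by
  unfold chi; rw [dotProduct_comm]

lemma zmod2_cases (a : ZMod 2) : a = 0 ∨ a = 1 := by
  revert a; decide

lemma chi_add {n : ℕ} (u x y : V n) : chi u (x + y) = chi u x * chi u y := by
  unfold chi
  rw [dotProduct_add]
  rcases zmod2_cases (u ⬝ᵥ x) with h | h <;> rcases zmod2_cases (u ⬝ᵥ y) with h' | h' <;>
    rw [h, h'] <;> norm_num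
  decide

lemma chi_zero {n : ℕ} (u : V n) : chi u 0 = 1 := by simp [chi]

lemma chi_sq {n : ℕ} (u x : V n) : chi u x * chi u x = 1 := by
  unfold chi; split_ifs <;> norm_num

lemma abs_chi {n : ℕ} (u x : V n) : |chi u x| = 1 := by
  unfold chi; split_ifs <;> norm_num

lemma add_self' {n : ℕ} (x : V n) : x + x = 0 := by
  funext i; exact CharTwo.add_self_eq_zero (x i)

lemma add_add_cancel' {n : ℕ} (x y : V n) : x + y + y = x := by
  rw [add_assoc, add_self', add_zero]

lemma add_eq_zero' {n : ℕ} {x y : V n} : x + y = 0 ↔ x = y := by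
  constructor
  · intro h
    have := add_add_cancel' x y
    rw [h, zero_add] at this
    exact this.symm
  · rintro rfl; exact add_self' x

noncomputable def NN (n : ℕ) : ℝ := 2 ^ n

lemma NN_pos (n : ℕ) : 0 < NN n := by unfold NN; positivity

lemma card_V (n : ℕ) : Fintype.card (V n) = 2 ^ n := by
  simp [V, ZMod.card]

lemma sum_one (n : ℕ) : ∑ _x : V n, (1 : ℝ) = NN n := by
  rw [sum_const, card_univ, card_V]; simp [NN]

lemma sum_shift {n : ℕ} (y : V n) (f : V n → ℝ) : ∑ x, f (x + y) = ∑ x, f x :=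
  Fintype.sum_equiv (Equiv.addRight y) _ _ (fun _ => rfl)

lemma exists_dot {n : ℕ} {u : V n} (hu : u ≠ 0) : ∃ t : V n, u ⬝ᵥ t = 1 := by
  obtain ⟨i, hi⟩ := Function.ne_iff.mp hu
  refine ⟨Pi.single i 1, ?_⟩
  rcases zmod2_cases (u i) with h | h
  · exact absurd h hi
  · simp [h]

lemma sum_chi {n : ℕ} {u : V n} (hu : u ≠ 0) : ∑ x, chi u x = 0 := by
  obtain ⟨t, ht⟩ := exists_dot hu
  have h1 := sum_shift t (chi u)
  simp only [chi_add, ← sum_mul] at h1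
  have : chi u t = -1 := by simp [chi, ht]
  rw [this] at h1; linarith

lemma sum_chi' {n : ℕ} (x : V n) : ∑ u, chi u x = if x = 0 then NN n else 0 := by
  simp only [fun u => chi_comm u x]
  split_ifs with h
  · subst h
    rw [← sum_one]
    exact sum_congr rfl (fun x _ => by simp [chi])
  · exact sum_chi h

noncomputable def F {n : ℕ} (f : V n → ℝ) (u : V n) : ℝ := ∑ x, f x * chi u x

noncomputable def r {n : ℕ} (f g : V n → ℝ) (z : V n) : ℝ := ∑ x, f x * g (x + z)

noncomputable def T {n : ℕ} (f g h : V n → ℝ) : ℝ := ∑ z, h z * r f g z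

lemma F_zero {n : ℕ} (f : V n → ℝ) : F f 0 = ∑ x, f x := by
  simp [F, chi]

lemma parseval {n : ℕ} (f g : V n → ℝ) : ∑ u, F f u * F g u = NN n * ∑ x, f x * g x := by
  have : ∀ u, F f u * F g u = ∑ x, ∑ y, f x * g y * chi u (x + y) := by
    intro u
    unfold F
    rw [sum_mul_sum]
    refine sum_congr rfl fun x _ => sum_congr rfl fun y _ => ?_
    rw [chi_add]; ring
  simp only [this]
  rw [sum_comm, mul_sum]
  refine sum_congr rfl fun x _ => ?_
  rw [sum_comm]
  simp only [← mul_sum, sum_chi', add_eq_zero']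
  simp
  ring

lemma F_r {n : ℕ} (f g : V n → ℝ) (u : V n) : F (r f g) u = F f u * F g u := by
  unfold F r
  rw [sum_mul_sum]
  simp only [sum_mul]
  rw [sum_comm]
  refine sum_congr rfl fun x _ => ?_
  rw [← sum_shift x]
  refine sum_congr rfl fun y _ => ?_
  rw [add_comm x, add_add_cancel', chi_add]
  ring

lemma T_fourier {n : ℕ} (f g h : V n → ℝ) :
    NN n * T f g h = ∑ u, F f u * F g u * F h u := by
  unfold T
  rw [← parseval]
  refine sum_congr rfl fun u _ => ?_
  rw [F_r]; ring

noncomputable def ind {n : ℕ} (A : Finset (V n)) (x : V n) : ℝ := if x ∈ A then 1 else 0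

lemma ind_nonneg {n : ℕ} (A : Finset (V n)) (x : V n) : 0 ≤ ind A x := by
  unfold ind; split_ifs <;> norm_num
lemma ind_le {n : ℕ} (A : Finset (V n)) (x : V n) : ind A x ≤ 1 := by
  unfold ind; split_ifs <;> norm_num
lemma ind_sq {n : ℕ} (A : Finset (V n)) (x : V n) : ind A x * ind A x = ind A x := by
  unfold ind; split_ifs <;> norm_num
lemma sum_ind {n : ℕ} (A : Finset (V n)) : ∑ x, ind A x = (#A : ℝ) := by
  unfold ind; simp
lemma sum_ind_mul {n : ℕ} (A : Finset (V n)) (f : V n → ℝ) : ∑ x, ind A x * f x = ∑ x ∈ A, f x := by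
  unfold ind; simp
lemma card_le_NN {n : ℕ} (A : Finset (V n)) : (#A : ℝ) ≤ NN n := by
  rw [← sum_ind, ← sum_one]; exact sum_le_sum fun x _ => ind_le A x

lemma parseval_ind {n : ℕ} (A : Finset (V n)) : ∑ u, F (ind A) u ^ 2 = NN n * #A := by
  simp only [pow_two]
  rw [parseval]; simp only [ind_sq, sum_ind]

lemma r_nonneg {n : ℕ} (A : Finset (V n)) (z : V n) : 0 ≤ r (ind A) (ind A) z :=
  sum_nonneg fun x _ => mul_nonneg (ind_nonneg _ _) (ind_nonneg _ _)

lemma r_le {n : ℕ} (A : Finset (V n)) (z : V n) : r (ind A) (ind A) z ≤ NN n := by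
  rw [← sum_one]
  exact sum_le_sum fun x _ => mul_le_one₀ (ind_le _ _) (ind_nonneg _ _) (ind_le _ _)

/-- half of A on side of u -/
lemma side0 {n : ℕ} (A : Finset (V n)) (u : V n) :
    (#(A.filter fun x => u ⬝ᵥ x = 0) : ℝ) = (#A + F (ind A) u) / 2 := by
  rw [F, sum_ind_mul, card_eq_sum_ones A, card_filter]
  push_cast
  rw [← sum_add_distrib, sum_div]
  refine sum_congr rfl fun x _ => ?_
  unfold chi; split_ifs <;> norm_num

lemma side1 {n : ℕ} (A : Finset (V n)) (u : V n) :
    (#(A.filter fun x => u ⬝ᵥ x = 1) : ℝ) = (#A - F (ind A) u) / 2 := by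
  rw [F, sum_ind_mul, card_eq_sum_ones A, card_filter]
  push_cast
  rw [← sum_sub_distrib, sum_div]
  refine sum_congr rfl fun x _ => ?_
  unfold chi
  rcases zmod2_cases (u ⬝ᵥ x) with h | h <;> rw [h] <;> norm_num

/-- stability -/
lemma stability {n : ℕ} (A Q : Finset (V n)) (κ δ : ℝ) (hκ : 0 < κ) (hκ1 : κ ≤ 1)
    (hδ : δ = κ / 48)
    (hA : (1/2 - δ) * NN n ≤ #A) (hQ : (1/2 - δ) * NN n ≤ #Q)
    (hT : T (ind A) (ind A) (ind Q) ≤ δ / 4 * NN n ^ 2) :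
    ∃ u : V n, u ≠ 0 ∧ ∃ c : ZMod 2, (#(A.filter fun x => u ⬝ᵥ x = c) : ℝ) ≤ κ * NN n := by
  have hN := NN_pos n
  set N := NN n
  have key : ∃ u : V n, u ≠ 0 ∧ F (ind Q) u < -(1/2 - 5 * δ) * N := by
    by_contra! hcon
    have h1 := T_fourier (ind A) (ind A) (ind Q)
    have h2 := parseval_ind A
    rw [← add_sum_erase _ _ (mem_univ (0 : V n)), F_zero, F_zero, sum_ind, sum_ind] at h1
    rw [← add_sum_erase _ _ (mem_univ (0 : V n)), F_zero, sum_ind] at h2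
    have h3 : -(1/2 - 5 * δ) * N * ∑ u ∈ univ.erase (0 : V n), F (ind A) u ^ 2 ≤
        ∑ u ∈ univ.erase (0 : V n), F (ind A) u * F (ind A) u * F (ind Q) u := by
      rw [mul_sum]
      refine sum_le_sum fun u hu => ?_
      have := hcon u (ne_of_mem_erase hu)
      nlinarith [sq_nonneg (F (ind A) u)]
    have h4 : ∑ u ∈ univ.erase (0 : V n), F (ind A) u ^ 2 = N * #A - (#A : ℝ) ^ 2 := by linarith
    rw [h4] at h3
    obtain ⟨a, ha⟩ : ∃ a : ℝ, (#A : ℝ) = a * N := ⟨#A / N, by field_simp⟩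
    obtain ⟨q, hq⟩ : ∃ q : ℝ, (#Q : ℝ) = q * N := ⟨#Q / N, by field_simp⟩
    rw [ha] at hA h1 h3
    rw [hq] at hQ h1
    have hA' := le_of_mul_le_mul_right hA hN
    have hQ' := le_of_mul_le_mul_right hQ hN
    have h5 : a ^ 2 * q - (1/2 - 5*δ) * (a - a^2) ≤ δ / 4 := by
      have : N ^ 3 * (a ^ 2 * q - (1/2 - 5*δ) * (a - a^2)) ≤ N ^ 3 * (δ / 4) := by
        have := mul_le_mul_of_nonneg_left hT hN.le
        nlinarith
      exact le_of_mul_le_mul_left this (by positivity)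
    have h6 : a ^ 2 * (1/2 - δ) ≤ a ^ 2 * q := mul_le_mul_of_nonneg_left hQ' (sq_nonneg a)
    have h7 : a * (δ + 6 * δ ^ 2) ≤ a * (a * (1 - 6 * δ) - (1/2 - 5 * δ)) := by
      apply mul_le_mul_of_nonneg_left _ (by linarith)
      nlinarith
    nlinarith
  obtain ⟨u, hu, hF⟩ := key
  refine ⟨u, hu, ?_⟩
  have e1 : T (ind A) (ind A) (fun z => (1 - chi u z) / 2) = ((#A : ℝ) ^ 2 - F (ind A) u ^ 2) / 2 := by
    have a1 : ∑ z, r (ind A) (ind A) z = (#A : ℝ) ^ 2 := by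
      rw [← F_zero, F_r, F_zero, sum_ind, sq]
    have a2 : ∑ z, r (ind A) (ind A) z * chi u z = F (ind A) u ^ 2 := by
      have := F_r (ind A) (ind A) u
      rw [sq, ← this]; rfl
    rw [← a1, ← a2, ← sum_sub_distrib, sum_div]
    exact sum_congr rfl fun z _ => by ring
  have e2 : T (ind A) (ind A) (fun z => (1 - chi u z) / 2) ≤ T (ind A) (ind A) (ind Q) +
      N * ∑ z, (1 - chi u z) / 2 * (1 - ind Q z) := by
    unfold T
    rw [mul_sum, ← sum_add_distrib]
    refine sum_le_sum fun z _ => ?_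
    have h1 := r_nonneg A z
    have h2 : r (ind A) (ind A) z ≤ N := r_le A z
    generalize r (ind A) (ind A) z = R at h1 h2
    simp only [chi, ind]
    split_ifs <;> norm_num <;> linarith
  have e3 : ∑ z, (1 - chi u z) / 2 * (1 - ind Q z) = (N - #Q + F (ind Q) u) / 2 := by
    have : F (ind Q) u = F (ind Q) u - ∑ z, chi u z := by rw [sum_chi hu, sub_zero]
    rw [this, ← sum_ind, show N = NN n from rfl, ← sum_one]
    unfold F
    rw [← sum_sub_distrib, ← sum_sub_distrib, ← sum_add_distrib, sum_div]
    exact sum_congr rfl fun z _ => by ring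
  have e4 : ((#A : ℝ) ^ 2 - F (ind A) u ^ 2) / 2 ≤ 4 * δ * N ^ 2 := by
    rw [← e1]
    refine e2.trans ?_
    rw [e3]
    nlinarith
  have s0 := side0 A u
  have s1 := side1 A u
  by_contra! hcon
  have c0 := hcon 0
  have c1 := hcon 1
  rw [s0] at c0
  rw [s1] at c1
  have : ((#A : ℝ) ^ 2 - F (ind A) u ^ 2) / 2 =
    2 * (((#A : ℝ) + F (ind A) u) / 2) * (((#A : ℝ) - F (ind A) u) / 2) := by ring
  rw [this] at e4
  set p := ((#A : ℝ) + F (ind A) u) / 2 with hp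
  set q := ((#A : ℝ) - F (ind A) u) / 2 with hq
  have hpq : p + q = #A := by rw [hp, hq]; ring
  have hbig : N / 4 ≤ p + q := by nlinarith
  have hk : 0 < κ * N := by positivity
  rcases le_total p q with h | h
  · have : κ * N * (N / 8) < p * q :=
      mul_lt_mul c0 (by linarith) (by positivity) (by linarith)
    nlinarith [mul_pos hk hN]
  · have : κ * N * (N / 8) < q * p :=
      mul_lt_mul c1 (by linarith) (by positivity) (by linarith)
    nlinarith [mul_pos hk hN]


lemma exists_enum {n k : ℕ} (S : Finset (V n)) (h : #S ≤ k) :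
    ∃ u : Fin k → V n, ∀ s ∈ S, ∃ i, u i = s := by
  classical
  refine ⟨fun i => if hi : i.1 < #S then (S.equivFin.symm ⟨i.1, hi⟩ : V n) else 0, fun s hs => ?_⟩
  refine ⟨⟨(S.equivFin ⟨s, hs⟩).1, lt_of_lt_of_le (S.equivFin ⟨s, hs⟩).2 h⟩, ?_⟩
  simp

/-- class of structured sets -/
def cls (n k : ℕ) : Finset (Finset (V n)) :=
  Finset.image (fun p : (Fin k → V n) × Finset (Fin k → ZMod 2) =>
    univ.filter fun x => (fun i => p.1 i ⬝ᵥ x) ∈ p.2) univ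

lemma card_cls (n k : ℕ) : #(cls n k) ≤ 2 ^ (n * k + 2 ^ k) := by
  refine card_image_le.trans ?_
  rw [card_univ, Fintype.card_prod, Fintype.card_finset, Fintype.card_fun, Fintype.card_fun, card_V,
    ZMod.card, Fintype.card_fin, Fintype.card_fin, ← pow_mul, ← pow_add]

lemma F_abs_le {n : ℕ} (f : V n → ℝ) (u : V n) (W : Finset (V n)) (hW : (0 : ℝ) < #W)
    (g : V n → ℝ) (hg : g = fun x => (∑ w ∈ W, f (x + w)) / #W) :
    F g u = F f u * ((∑ w ∈ W, chi u w) / #W) := by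
  subst hg
  unfold F
  simp only [sum_div, sum_mul, mul_sum]
  rw [sum_comm]
  refine sum_congr rfl fun w _ => ?_
  rw [← sum_shift w]
  refine sum_congr rfl fun x _ => ?_
  rw [add_add_cancel', chi_add]
  ring

lemma T_mono {n : ℕ} (f g h : V n → ℝ) (hf : ∀ x, 0 ≤ f x) (hfg : ∀ x, f x ≤ g x)
    (hh : ∀ x, 0 ≤ h x) : T f f h ≤ T g g h := by
  refine sum_le_sum fun z _ => mul_le_mul_of_nonneg_left ?_ (hh z)
  refine sum_le_sum fun x _ => ?_
  exact mul_le_mul (hfg _) (hfg _) (hf _) ((hf _).trans (hfg _))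

lemma T_smul {n : ℕ} (c : ℝ) (f h : V n → ℝ) :
    T (fun x => c * f x) (fun x => c * f x) h = c ^ 2 * T f f h := by
  unfold T r
  simp only [mul_sum]
  exact sum_congr rfl fun z _ => sum_congr rfl fun x _ => by ring

lemma regularity (ε₁ ε₂ : ℝ) (h₁ : 0 < ε₁) (h₂ : 0 < ε₂) : ∃ k : ℕ, ∀ n : ℕ, ∀ A B : Finset (V n),
    (∀ a ∈ A, ∀ b ∈ A, a + b ∉ B) → ∃ A' ∈ cls n k,
      (#(A \ A') : ℝ) ≤ ε₁ * NN n ∧ T (ind A') (ind A') (ind B) ≤ ε₂ * NN n ^ 2 := by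
  classical
  set τ : ℝ := ε₁ ^ 2 * ε₂ with hτ
  have τpos : 0 < τ := by positivity
  refine ⟨⌈1 / τ ^ 2⌉₊, fun n A B hAB => ?_⟩
  have hN := NN_pos n
  set N := NN n with hNdef
  set S : Finset (V n) := univ.filter fun u => τ * N ≤ |F (ind A) u| with hS
  have hScard : #S ≤ ⌈1 / τ ^ 2⌉₊ := by
    have h3 : (#S : ℝ) * (τ * N) ^ 2 ≤ N * N := by
      calc (#S : ℝ) * (τ * N) ^ 2 = ∑ u ∈ S, (τ * N) ^ 2 := by rw [sum_const, nsmul_eq_mul]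
        _ ≤ ∑ u ∈ S, F (ind A) u ^ 2 := by
          refine sum_le_sum fun u hu => ?_
          rw [← sq_abs (F (ind A) u)]
          have : τ * N ≤ |F (ind A) u| := by simpa [hS] using hu
          gcongr
        _ ≤ ∑ u, F (ind A) u ^ 2 := sum_le_sum_of_subset_of_nonneg (subset_univ _)
          (fun _ _ _ => sq_nonneg _)
        _ = N * #A := parseval_ind A
        _ ≤ N * N := by gcongr; exact card_le_NN A
    have h4 : (#S : ℝ) ≤ 1 / τ ^ 2 := by
      rw [le_div_iff₀ (by positivity)]
      have : (#S : ℝ) * τ ^ 2 * (N * N) ≤ 1 * (N * N) := by nlinarith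
      exact le_of_mul_le_mul_right this (by positivity)
    exact_mod_cast h4.trans (Nat.le_ceil _)
  obtain ⟨e, he⟩ := exists_enum S hScard
  set W : Finset (V n) := univ.filter fun w => ∀ u ∈ S, chi u w = 1 with hW
  have hW0 : (0 : V n) ∈ W := by simp [hW, chi_zero]
  have hWpos : (0 : ℝ) < #W := by exact_mod_cast card_pos.mpr ⟨0, hW0⟩
  have hWadd : ∀ v ∈ W, ∀ w ∈ W, v + w ∈ W := by
    intro v hv w hw
    simp only [hW, mem_filter, mem_univ, true_and] at *
    intro u hu
    rw [chi_add, hv u hu, hw u hu, one_mul]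
  set f : V n → ℝ := fun x => (∑ w ∈ W, ind A (x + w)) / #W with hf
  have hf0 : ∀ x, 0 ≤ f x := fun x => div_nonneg (sum_nonneg fun _ _ => ind_nonneg _ _) hWpos.le
  have hfinv : ∀ x, ∀ v ∈ W, f (x + v) = f x := by
    intro x v hv
    simp only [hf]
    congr 1
    refine sum_nbij' (fun w => v + w) (fun w => v + w) (fun w hw => hWadd v hv w hw)
      (fun w hw => hWadd v hv w hw) ?_ ?_ ?_
    · intro w _; rw [← add_assoc, add_self', zero_add]
    · intro w _; rw [← add_assoc, add_self', zero_add]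
    · intro w _; rw [add_assoc]
  have hFf : ∀ u, F f u = F (ind A) u * ((∑ w ∈ W, chi u w) / #W) := fun u =>
    F_abs_le (ind A) u W hWpos f rfl
  have hTAB : T (ind A) (ind A) (ind B) = 0 := by
    refine sum_eq_zero fun z _ => ?_
    by_cases hz : z ∈ B
    · have : r (ind A) (ind A) z = 0 := by
        refine sum_eq_zero fun x _ => ?_
        unfold ind
        by_cases h1 : x ∈ A
        · by_cases h2 : x + z ∈ A
          · exfalso
            apply hAB x h1 _ h2
            rwa [← add_assoc, add_self', zero_add]
          · simp [h2]
        · simp [h1]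
      rw [this, mul_zero]
    · simp [ind, hz]
  have hTf : T f f (ind B) ≤ τ * N ^ 2 := by
    have h3 : N * T f f (ind B) ≤ N * (τ * N ^ 2) := by
      have h5 : N * T f f (ind B) = ∑ u, (F f u * F f u - F (ind A) u * F (ind A) u) * F (ind B) u := by
        have : N * T f f (ind B) = N * T f f (ind B) - N * T (ind A) (ind A) (ind B) := by
          rw [hTAB]; ring
        rw [this, T_fourier, T_fourier, ← sum_sub_distrib]
        exact sum_congr rfl fun u _ => by ring
      rw [h5]
      have h6 : ∀ u, (F f u * F f u - F (ind A) u * F (ind A) u) * F (ind B) u ≤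
          τ * N * ((F (ind A) u ^ 2 + F (ind B) u ^ 2) / 2) := by
        intro u
        by_cases hu : u ∈ S
        · have : F f u = F (ind A) u := by
            rw [hFf]
            have : ∑ w ∈ W, chi u w = #W := by
              rw [card_eq_sum_ones]; push_cast
              refine sum_congr rfl fun w hw => ?_
              simp only [hW, mem_filter, mem_univ, true_and] at hw
              exact hw u hu
            rw [this, div_self hWpos.ne', mul_one]
          rw [this, sub_self, zero_mul]
          positivity
        · have hlt : |F (ind A) u| ≤ τ * N := by
            simp only [hS, mem_filter, mem_univ, true_and, not_le] at hu
            exact hu.le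
          set t := (∑ w ∈ W, chi u w) / (#W : ℝ) with ht
          have htabs : |t| ≤ 1 := by
            rw [ht, abs_div, abs_of_pos hWpos, div_le_one hWpos]
            refine (abs_sum_le_sum_abs _ _).trans ?_
            simp [abs_chi]
          have ht2 : t ^ 2 ≤ 1 := (sq_le_one_iff_abs_le_one t).mpr htabs
          rw [hFf u]
          set a := F (ind A) u
          set b := F (ind B) u
          calc (a * t * (a * t) - a * a) * b ≤ |(a * t * (a * t) - a * a) * b| := le_abs_self _
            _ = (1 - t ^ 2) * (|a| * (|a| * |b|)) := by
              have : (a * t * (a * t) - a * a) * b = -((1 - t^2) * (a * (a * b))) := by ring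
              rw [this, abs_neg, abs_mul, abs_mul, abs_mul, abs_of_nonneg (by linarith : 0 ≤ 1 - t ^ 2)]
            _ ≤ 1 * (|a| * (|a| * |b|)) := by
              apply mul_le_mul_of_nonneg_right _ (by positivity)
              nlinarith [sq_nonneg t]
            _ = |a| * (|a| * |b|) := one_mul _
            _ ≤ τ * N * (|a| * |b|) := by gcongr
            _ ≤ τ * N * ((a ^ 2 + b ^ 2) / 2) := by
              gcongr
              nlinarith [sq_nonneg (|a| - |b|), sq_abs a, sq_abs b]
      refine (sum_le_sum fun u _ => h6 u).trans ?_
      rw [← mul_sum, ← sum_div, sum_add_distrib, parseval_ind, parseval_ind]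
      have hA := card_le_NN A
      have hB := card_le_NN B
      have : (N * (#A : ℝ) + N * #B) / 2 ≤ N * N := by nlinarith
      calc τ * N * ((N * (#A : ℝ) + N * #B) / 2) ≤ τ * N * (N * N) := by gcongr
        _ = N * (τ * N ^ 2) := by ring
    exact le_of_mul_le_mul_left h3 hN
  set A' : Finset (V n) := univ.filter fun x => ε₁ ≤ f x with hA'
  refine ⟨A', ?_, ?_, ?_⟩
  · rw [cls, mem_image]
    refine ⟨(e, A'.image fun x i => e i ⬝ᵥ x), mem_univ _, ?_⟩
    ext x
    simp only [mem_filter, mem_univ, true_and, mem_image]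
    constructor
    · rintro ⟨y, hy, hyx⟩
      have hw : x + y ∈ W := by
        simp only [hW, mem_filter, mem_univ, true_and]
        intro u hu
        obtain ⟨i, rfl⟩ := he u hu
        have := congrFun hyx i
        rw [chi_add]
        unfold chi
        rw [this]
        split_ifs <;> norm_num
      have h3 := hfinv y (x + y) hw
      rw [add_comm x y, ← add_assoc, add_self', zero_add] at h3
      simp only [hA', mem_filter, mem_univ, true_and] at hy ⊢
      rwa [h3]
    · intro hx
      exact ⟨x, hx, rfl⟩
  · have h3 : (#(A \ A') : ℝ) = ∑ x, (1 - ind A' x) * ind A x := by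
      rw [← sum_ind]
      refine sum_congr rfl fun x _ => ?_
      simp only [ind, mem_sdiff]
      by_cases hx : x ∈ A <;> by_cases hx' : x ∈ A' <;> simp [hx, hx']
    have hAinv : ∀ x, ∀ v ∈ W, ind A' (x + v) = ind A' x := by
      intro x v hv
      simp only [ind, hA', mem_filter, mem_univ, true_and, hfinv x v hv]
    have h4 : ∑ x, (1 - ind A' x) * ind A x = ∑ x, (1 - ind A' x) * f x := by
      have : ∀ w ∈ W, ∑ x, (1 - ind A' x) * ind A (x + w) = ∑ x, (1 - ind A' x) * ind A x := by
        intro w hw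
        rw [← sum_shift w (fun x => (1 - ind A' x) * ind A x)]
        exact sum_congr rfl fun x _ => by rw [hAinv x w hw]
      simp only [hf, sum_div, mul_sum]
      rw [sum_comm]
      have h7 : ∀ w ∈ W, ∑ x, (1 - ind A' x) * (ind A (x + w) / (#W : ℝ)) =
          (∑ x, (1 - ind A' x) * ind A x) / #W := by
        intro w hw
        rw [← this w hw, sum_div]
        exact sum_congr rfl fun x _ => by ring
      rw [sum_congr rfl h7, sum_const, nsmul_eq_mul]
      field_simp
    rw [h3, h4, hNdef, ← sum_one, mul_sum]
    refine sum_le_sum fun x _ => ?_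
    by_cases hx : x ∈ A'
    · simp only [ind, hx, if_true]; linarith
    · have : f x < ε₁ := by simpa [hA'] using hx
      simp only [ind, hx, if_false]; linarith
  · have h3 : T (fun x => ε₁ * ind A' x) (fun x => ε₁ * ind A' x) (ind B) ≤ T f f (ind B) := by
      refine T_mono _ _ _ (fun x => mul_nonneg h₁.le (ind_nonneg _ _)) ?_ (ind_nonneg B)
      intro x
      by_cases hx : x ∈ A'
      · have : ε₁ ≤ f x := by simpa [hA'] using hx
        simpa [ind, hx] using this
      · simpa [ind, hx] using hf0 x
    rw [T_smul] at h3
    have h4 : ε₁ ^ 2 * T (ind A') (ind A') (ind B) ≤ ε₁ ^ 2 * (ε₂ * N ^ 2) := by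
      rw [hτ] at hTf; linarith
    exact le_of_mul_le_mul_left h4 (by positivity)


lemma small_count (γ : ℝ) (hγ : 0 < γ) : ∃ c : ℝ, 0 < c ∧ ∀ n : ℕ,
    (#(univ.filter fun S : Finset (V n) => (#S : ℝ) ≤ c * NN n) : ℝ) ≤ (2 : ℝ) ^ (γ * NN n) := by
  set x : ℝ := min (γ / 4) (1 / 2) with hx
  have hx0 : 0 < x := by rw [hx]; positivity
  have hx1 : x ≤ γ / 4 := min_le_left _ _
  have hx2 : x ≤ 1 / 2 := min_le_right _ _
  set L : ℝ := - Real.log x with hL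
  have hL0 : 0 < L := by
    have := Real.log_neg hx0 (by linarith)
    linarith
  refine ⟨x / L, by positivity, fun n => ?_⟩
  have hN := NN_pos n
  have hxe : x = Real.exp (-L) := by rw [hL, neg_neg, Real.exp_log hx0]
  have hsum : ∑ S : Finset (V n), x ^ #S = (x + 1) ^ (2 ^ n) := by
    have := Fintype.sum_pow_mul_eq_add_pow (V n) x 1
    simp only [one_pow, mul_one, card_V] at this
    exact this
  calc (#(univ.filter fun S : Finset (V n) => (#S : ℝ) ≤ x / L * NN n) : ℝ)
      = ∑ S ∈ univ.filter (fun S : Finset (V n) => (#S : ℝ) ≤ x / L * NN n), (1 : ℝ) := by simp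
    _ ≤ ∑ S ∈ univ.filter (fun S : Finset (V n) => (#S : ℝ) ≤ x / L * NN n),
        x ^ #S * Real.exp (x * NN n) := by
        refine sum_le_sum fun S hS => ?_
        have hS' : (#S : ℝ) ≤ x / L * NN n := by simpa using hS
        have : x ^ #S = Real.exp (#S * (-L)) := by
          rw [Real.exp_nat_mul, ← hxe]
        rw [this, ← Real.exp_add]
        apply Real.one_le_exp
        have : (#S : ℝ) * L ≤ x / L * NN n * L := by gcongr
        have e : x / L * NN n * L = x * NN n := by field_simp
        linarith
    _ ≤ ∑ S : Finset (V n), x ^ #S * Real.exp (x * NN n) :=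
        sum_le_sum_of_subset_of_nonneg (subset_univ _) (fun _ _ _ => by positivity)
    _ = (x + 1) ^ (2 ^ n) * Real.exp (x * NN n) := by rw [← sum_mul, hsum]
    _ ≤ Real.exp (x * NN n) * Real.exp (x * NN n) := by
        gcongr
        calc (x + 1) ^ (2 ^ n) ≤ (Real.exp x) ^ (2 ^ n) := by
              gcongr; exact Real.add_one_le_exp x
          _ = Real.exp (x * NN n) := by
              rw [← Real.exp_nat_mul]; congr 1; unfold NN; push_cast; ring
    _ ≤ (2 : ℝ) ^ (γ * NN n) := by
        rw [← Real.exp_add, Real.rpow_def_of_pos (by norm_num)]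
        apply Real.exp_le_exp.mpr
        have h2 : (1 : ℝ) / 2 ≤ Real.log 2 := by linarith [Real.log_two_gt_d9]
        have : x * NN n + x * NN n = (2 * x) * NN n := by ring
        rw [this]
        have : Real.log 2 * (γ * NN n) = (Real.log 2 * γ) * NN n := by ring
        rw [this]
        apply mul_le_mul_of_nonneg_right _ hN.le
        nlinarith

lemma count_near {n : ℕ} (P : Finset (V n)) (t γ : ℝ)
    (h : (#(univ.filter fun S : Finset (V n) => (#S : ℝ) ≤ t) : ℝ) ≤ (2 : ℝ) ^ γ) :
    (#(univ.filter fun A : Finset (V n) => (#(A \ P) : ℝ) ≤ t) : ℝ) ≤ (2 : ℝ) ^ (#P + γ : ℝ) := by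
  have h1 : #(univ.filter fun A : Finset (V n) => (#(A \ P) : ℝ) ≤ t) ≤
      #(P.powerset ×ˢ (univ.filter fun S : Finset (V n) => (#S : ℝ) ≤ t)) := by
    apply card_le_card_of_injOn (fun A => (A ∩ P, A \ P))
    · intro A hA
      have : (#(A \ P) : ℝ) ≤ t := by simpa using hA
      simpa [inter_subset_right] using this
    · intro A _ A' _ hAA
      simp only [Prod.mk.injEq] at hAA
      rw [← sup_inf_sdiff A P, ← sup_inf_sdiff A' P]
      change A ∩ P ∪ A \ P = A' ∩ P ∪ A' \ P
      rw [hAA.1, hAA.2]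
  rw [card_product, card_powerset] at h1
  have h2 : (#(univ.filter fun A : Finset (V n) => (#(A \ P) : ℝ) ≤ t) : ℝ) ≤
      2 ^ #P * (#(univ.filter fun S : Finset (V n) => (#S : ℝ) ≤ t) : ℝ) := by exact_mod_cast h1
  refine h2.trans ?_
  rw [Real.rpow_add (by norm_num), Real.rpow_natCast]
  gcongr

lemma card_side1 {n : ℕ} {u : V n} (hu : u ≠ 0) :
    (#(univ.filter fun x : V n => u ⬝ᵥ x = 1) : ℝ) = NN n / 2 := by
  rw [side1]
  have : F (ind (univ : Finset (V n))) u = 0 := by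
    rw [F, sum_ind_mul, sum_chi hu]
  rw [this, sub_zero, ← sum_ind, ← sum_one]
  simp [ind]

lemma count_full {n : ℕ} {u : V n} (hu : u ≠ 0) :
    (#(univ.filter fun S : Finset (V n) => ∀ x, u ⬝ᵥ x = 0 → x ∈ S) : ℝ) ≤ (2 : ℝ) ^ (NN n / 2) := by
  have h1 : #(univ.filter fun S : Finset (V n) => ∀ x, u ⬝ᵥ x = 0 → x ∈ S) ≤
      #((univ.filter fun x : V n => u ⬝ᵥ x = 1).powerset) := by
    apply card_le_card_of_injOn (fun S => S.filter fun x => u ⬝ᵥ x = 1)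
    · intro S _
      simp only [coe_powerset, Set.mem_preimage, Set.mem_powerset_iff, coe_subset]
      exact filter_subset_filter _ (subset_univ _)
    · intro S hS S' hS' h
      have hS : ∀ x, u ⬝ᵥ x = 0 → x ∈ S := by simpa using hS
      have hS' : ∀ x, u ⬝ᵥ x = 0 → x ∈ S' := by simpa using hS'
      ext x
      rcases zmod2_cases (u ⬝ᵥ x) with hx | hx
      · exact ⟨fun _ => hS' x hx, fun _ => hS x hx⟩
      · have := Finset.ext_iff.mp h x
        simpa [hx] using this
  rw [card_powerset] at h1
  rw [← card_side1 hu, Real.rpow_natCast]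
  exact_mod_cast h1

lemma count_ext {n : ℕ} {u x : V n} (hu : u ≠ 0) (hx : x ≠ 0) (hux : u ⬝ᵥ x = 0) (t γ : ℝ)
    (h : (#(univ.filter fun S : Finset (V n) => (#S : ℝ) ≤ t) : ℝ) ≤ (2 : ℝ) ^ γ) :
    (#(univ.filter fun A : Finset (V n) => (#(A.filter fun y => u ⬝ᵥ y = 0) : ℝ) ≤ t ∧
      ∀ y ∈ A, y + x ∉ A) : ℝ) ≤ (2 : ℝ) ^ (2 / 5 * NN n + γ) := by
  classical
  obtain ⟨i, hi⟩ := Function.ne_iff.mp hx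
  have hi : x i = 1 := (zmod2_cases (x i)).resolve_left hi
  set P : Finset (V n) := univ.filter fun y => u ⬝ᵥ y = 1 ∧ y i = 0 with hP
  have hPcard : (#P : ℝ) ≤ NN n / 4 := by
    have h1 : #P + #P ≤ #(univ.filter fun x : V n => u ⬝ᵥ x = 1) := by
      have e : #(P.image fun y => y + x) = #P := card_image_of_injective _ (add_left_injective x)
      nth_rewrite 2 [← e]
      rw [← card_union_of_disjoint]
      · apply card_le_card
        intro y hy
        rw [mem_union, mem_image] at hy
        rcases hy with hy | ⟨z, hz, rfl⟩
        · simp only [hP, mem_filter, mem_univ, true_and] at hy ⊢; exact hy.1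
        · simp only [hP, mem_filter, mem_univ, true_and] at hz ⊢
          rw [dotProduct_add, hz.1, hux, add_zero]
      · rw [disjoint_left]
        intro y hy hy'
        rw [mem_image] at hy'
        obtain ⟨z, hz, rfl⟩ := hy'
        simp only [hP, mem_filter, mem_univ, true_and] at hz hy
        have := hy.2
        simp [hz.2, hi] at this
    have h2 : (#P : ℝ) + #P ≤ NN n / 2 := by
      rw [← card_side1 hu]; exact_mod_cast h1
    linarith
  have h1 : #(univ.filter fun A : Finset (V n) => (#(A.filter fun y => u ⬝ᵥ y = 0) : ℝ) ≤ t ∧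
      ∀ y ∈ A, y + x ∉ A) ≤
      #((univ.filter fun S : Finset (V n) => (#S : ℝ) ≤ t) ×ˢ (univ : Finset (P → Fin 3))) := by
    apply card_le_card_of_injOn (fun A => (A.filter fun y => u ⬝ᵥ y = 0,
      fun p : P => if p.1 ∈ A then (1 : Fin 3) else if p.1 + x ∈ A then 2 else 0))
    · intro A hA
      have : (#(A.filter fun y => u ⬝ᵥ y = 0) : ℝ) ≤ t := by
        simp only [coe_filter, mem_univ, true_and, Set.mem_ofPred_eq] at hA; exact hA.1
      simpa using this
    · intro A hA B hB hAB
      simp only [coe_filter, mem_univ, true_and, Set.mem_ofPred_eq] at hA hB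
      simp only [Prod.mk.injEq] at hAB
      obtain ⟨hAB0, hAB1⟩ := hAB
      have key : ∀ A B : Finset (V n), (∀ y ∈ A, y + x ∉ A) → (∀ y ∈ B, y + x ∉ B) →
          ((A.filter fun y => u ⬝ᵥ y = 0) = B.filter fun y => u ⬝ᵥ y = 0) →
          ((fun p : P => if p.1 ∈ A then (1 : Fin 3) else if p.1 + x ∈ A then 2 else 0) =
          (fun p : P => if p.1 ∈ B then (1 : Fin 3) else if p.1 + x ∈ B then 2 else 0)) →
          ∀ y, y ∈ A → y ∈ B := by
        intro A B hA hB h0 h1 y hy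
        rcases zmod2_cases (u ⬝ᵥ y) with hy0 | hy1
        · have := Finset.ext_iff.mp h0 y
          simp only [mem_filter, hy0, and_true] at this
          exact this.mp hy
        · rcases zmod2_cases (y i) with hyi | hyi
          · have hyP : y ∈ P := by simp [hP, hy1, hyi]
            have := congrFun h1 ⟨y, hyP⟩
            simp only [hy, if_true] at this
            by_contra hyB
            simp only [hyB, if_false] at this
            split_ifs at this
            · exact absurd this (by decide)
            · exact absurd this (by decide)
          · have hyP : y + x ∈ P := by
              simp only [hP, mem_filter, mem_univ, true_and, dotProduct_add, hy1, hux, Pi.add_apply, hyi, hi]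
              decide
            have := congrFun h1 ⟨y + x, hyP⟩
            simp only [add_add_cancel', hy, hA y hy, if_true, if_false] at this
            by_contra hyB
            simp only [hyB, if_false] at this
            split_ifs at this
            · exact absurd this (by decide)
            · exact absurd this (by decide)
      ext y
      exact ⟨key A B hA.2 hB.2 hAB0 hAB1 y, key B A hB.2 hA.2 hAB0.symm hAB1.symm y⟩
  rw [card_product, card_univ, Fintype.card_fun, Fintype.card_fin, Fintype.card_coe] at h1
  have h2 : (#(univ.filter fun A : Finset (V n) => (#(A.filter fun y => u ⬝ᵥ y = 0) : ℝ) ≤ t ∧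
      ∀ y ∈ A, y + x ∉ A) : ℝ) ≤ (#(univ.filter fun S : Finset (V n) => (#S : ℝ) ≤ t) : ℝ) * 3 ^ #P := by
    exact_mod_cast h1
  refine h2.trans ?_
  rw [add_comm, Real.rpow_add (by norm_num)]
  have h3 : (3 : ℝ) ^ #P ≤ (2 : ℝ) ^ (2 / 5 * NN n) := by
    have h4 : (3 : ℝ) ≤ (2 : ℝ) ^ (8 / 5 : ℝ) := by
      have : (3 : ℝ) = ((3 : ℝ) ^ (5 : ℝ)) ^ (1 / 5 : ℝ) := by
        rw [← Real.rpow_mul (by norm_num)]; norm_num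
      rw [this]
      have h8 : (2 : ℝ) ^ (8 / 5 : ℝ) = ((2 : ℝ) ^ (8 : ℝ)) ^ (1 / 5 : ℝ) := by
        rw [← Real.rpow_mul (by norm_num)]; norm_num
      rw [h8]
      apply Real.rpow_le_rpow (by positivity) _ (by norm_num)
      norm_num
    calc (3 : ℝ) ^ #P ≤ ((2 : ℝ) ^ (8 / 5 : ℝ)) ^ #P := by gcongr
      _ = (2 : ℝ) ^ (8 / 5 * #P : ℝ) := by rw [Real.rpow_mul (by norm_num), Real.rpow_natCast]
      _ ≤ (2 : ℝ) ^ (2 / 5 * NN n) := by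
        apply Real.rpow_le_rpow_of_exponent_le (by norm_num)
        linarith
  gcongr

lemma large_n (K c : ℝ) (hc : 0 < c) : ∃ n₀ : ℕ, ∀ n ≥ n₀, (n : ℝ) * K ≤ c * NN n := by
  have h := tendsto_pow_const_div_const_pow_of_one_lt 1 (by norm_num : (1 : ℝ) < 2)
  have h' := h.mul_const K
  rw [zero_mul] at h'
  obtain ⟨n₀, hn⟩ := Filter.eventually_atTop.mp (h'.eventually (gt_mem_nhds hc))
  refine ⟨n₀, fun n hn' => ?_⟩
  have := hn n hn'
  have hN := NN_pos n
  rw [pow_one] at this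
  have e : (n : ℝ) * K = ((n : ℝ) / 2 ^ n * K) * NN n := by
    unfold NN; field_simp
  rw [e]
  exact mul_le_mul_of_nonneg_right this.le hN.le


lemma card_biUnion_real {α β : Type*} [DecidableEq β] (s : Finset α) (f : α → Finset β) (b : ℝ)
    (h : ∀ a ∈ s, (#(f a) : ℝ) ≤ b) : (#(s.biUnion f) : ℝ) ≤ #s * b := by
  have h1 : (#(s.biUnion f) : ℝ) ≤ ∑ a ∈ s, (#(f a) : ℝ) := by exact_mod_cast card_biUnion_le
  refine h1.trans ?_
  rw [← nsmul_eq_mul]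
  exact sum_le_card_nsmul _ _ _ h

noncomputable def Qs {n : ℕ} (ε : ℝ) (A : Finset (V n)) : Finset (V n) :=
  univ.filter fun z => r (ind A) (ind A) z ≤ ε * NN n

lemma T_Qs {n : ℕ} (ε : ℝ) (hε : 0 < ε) (A : Finset (V n)) :
    T (ind A) (ind A) (ind (Qs ε A)) ≤ ε * NN n ^ 2 := by
  have hN := NN_pos n
  unfold T
  rw [sum_ind_mul]
  calc ∑ z ∈ Qs ε A, r (ind A) (ind A) z ≤ ∑ z ∈ Qs ε A, ε * NN n := by
        refine sum_le_sum fun z hz => ?_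
        simpa [Qs] using hz
    _ = #(Qs ε A) * (ε * NN n) := by rw [sum_const, nsmul_eq_mul]
    _ ≤ NN n * (ε * NN n) := by gcongr; exact card_le_NN _
    _ = ε * NN n ^ 2 := by ring

lemma B_Qs {n : ℕ} (ε ε₁ : ℝ) (hε : 0 < ε) (A B : Finset (V n))
    (h : T (ind A) (ind A) (ind B) ≤ ε₁ * ε * NN n ^ 2) :
    (#(B \ Qs ε A) : ℝ) ≤ ε₁ * NN n := by
  have hN := NN_pos n
  have h1 : (#(B \ Qs ε A) : ℝ) * (ε * NN n) ≤ T (ind A) (ind A) (ind B) := by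
    unfold T
    rw [sum_ind_mul, ← nsmul_eq_mul]
    refine (card_nsmul_le_sum _ (r (ind A) (ind A)) _ ?_).trans
      (sum_le_sum_of_subset_of_nonneg sdiff_subset fun z _ _ => r_nonneg A z)
    intro z hz
    have : z ∉ Qs ε A := (mem_sdiff.mp hz).2
    simp only [Qs, mem_filter, mem_univ, true_and, not_le] at this
    exact this.le
  have h2 : (#(B \ Qs ε A) : ℝ) * (ε * NN n) ≤ (ε₁ * NN n) * (ε * NN n) := by
    refine (h1.trans h).trans (le_of_eq (by ring))
  exact le_of_mul_le_mul_right h2 (by positivity)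

lemma add_translate {n : ℕ} (A : Finset (V n)) (t : V n) :
    (A.image fun x => x + t) + (A.image fun x => x + t) = A + A := by
  ext z
  simp only [mem_add, mem_image]
  constructor
  · rintro ⟨_, ⟨a, ha, rfl⟩, _, ⟨b, hb, rfl⟩, rfl⟩
    refine ⟨a, ha, b, hb, ?_⟩
    rw [add_add_add_comm, add_self', add_zero]
  · rintro ⟨a, ha, b, hb, rfl⟩
    refine ⟨_, ⟨a, ha, rfl⟩, _, ⟨b, hb, rfl⟩, ?_⟩
    rw [add_add_add_comm, add_self', add_zero]

lemma normalize_side {n : ℕ} (A : Finset (V n)) {u : V n} (hu : u ≠ 0) (c : ZMod 2) :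
    ∃ A₁ : Finset (V n), A₁ + A₁ = A + A ∧
      #(A₁.filter fun y => u ⬝ᵥ y = 0) = #(A.filter fun y => u ⬝ᵥ y = c) := by
  rcases zmod2_cases c with rfl | rfl
  · exact ⟨A, rfl, rfl⟩
  · obtain ⟨t, ht⟩ := exists_dot hu
    refine ⟨A.image fun x => x + t, add_translate A t, ?_⟩
    rw [filter_image, card_image_of_injective _ (add_left_injective t)]
    congr 1
    ext y
    simp only [mem_filter, dotProduct_add, ht]
    rcases zmod2_cases (u ⬝ᵥ y) with h | h <;> rw [h] <;> simp
    intro _; decide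

lemma main_large : ∃ n₀ : ℕ, ∀ n ≥ n₀, 1 ≤ n →
    (#(sumsets n) : ℝ) ≤ (2 : ℝ) ^ (NN n / 2 + n + 3) := by
  classical
  obtain ⟨c₀, hc₀, hcount₀⟩ := small_count (9 / 100) (by norm_num)
  set κ : ℝ := min (c₀ / 2) 1 with hκ
  have hκ0 : 0 < κ := by rw [hκ]; positivity
  have hκ1 : κ ≤ 1 := min_le_right _ _
  have hκ2 : κ ≤ c₀ / 2 := min_le_left _ _
  obtain ⟨δ, hδ⟩ : ∃ δ : ℝ, δ = κ / 48 := ⟨_, rfl⟩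
  have hδ0 : 0 < δ := by rw [hδ]; positivity
  obtain ⟨c₁, hc₁, hcount₁⟩ := small_count (δ / 2) (by positivity)
  obtain ⟨ε₁, hε₁⟩ : ∃ ε₁ : ℝ, ε₁ = min c₁ (c₀ / 2) := ⟨_, rfl⟩
  have he0 : 0 < ε₁ := by rw [hε₁]; positivity
  have he1 : ε₁ ≤ c₁ := hε₁ ▸ min_le_left _ _
  have he2 : ε₁ ≤ c₀ / 2 := hε₁ ▸ min_le_right _ _
  obtain ⟨k, hk⟩ := regularity ε₁ (ε₁ * (δ / 4)) he0 (by positivity)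
  obtain ⟨n₁, hn₁⟩ := large_n (k + 2 ^ k) (δ / 2) (by positivity)
  obtain ⟨n₂, hn₂⟩ := large_n 2 (1 / 100) (by norm_num)
  refine ⟨max n₁ n₂, fun n hn hn1 => ?_⟩
  replace hn₁ := hn₁ n (le_trans (le_max_left _ _) hn)
  replace hn₂ := hn₂ n (le_trans (le_max_right _ _) hn)
  replace hk := hk n
  replace hcount₀ := hcount₀ n
  replace hcount₁ := hcount₁ n
  have hN := NN_pos n
  have hsm : (#(univ.filter fun S : Finset (V n) => (#S : ℝ) ≤ ε₁ * NN n) : ℝ) ≤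
      (2 : ℝ) ^ (δ / 2 * NN n) := by
    refine le_trans ?_ hcount₁
    have : #(univ.filter fun S : Finset (V n) => (#S : ℝ) ≤ ε₁ * NN n) ≤
        #(univ.filter fun S : Finset (V n) => (#S : ℝ) ≤ c₁ * NN n) := by
      apply card_le_card
      intro S hS
      simp only [mem_filter, mem_univ, true_and] at hS ⊢
      exact hS.trans (by gcongr)
    exact_mod_cast this
  have hcls : (#(cls n k) : ℝ) ≤ (2 : ℝ) ^ (δ / 2 * NN n) := by
    have h1 : (#(cls n k) : ℝ) ≤ (2 : ℝ) ^ (n * k + 2 ^ k) := by exact_mod_cast card_cls n k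
    refine h1.trans ?_
    rw [← Real.rpow_natCast]
    apply Real.rpow_le_rpow_of_exponent_le (by norm_num)
    push_cast
    have hn' : (1 : ℝ) ≤ n := by exact_mod_cast hn1
    have : (2 : ℝ) ^ k ≤ n * 2 ^ k := le_mul_of_one_le_left (by positivity) hn'
    linarith
  have hnear : ∀ P : Finset (V n), (#P : ℝ) ≤ (1 / 2 - δ) * NN n →
      (#(univ.filter fun A : Finset (V n) => (#(A \ P) : ℝ) ≤ ε₁ * NN n) : ℝ) ≤
      (2 : ℝ) ^ (NN n / 2 - δ / 2 * NN n) := by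
    intro P hP
    refine (count_near P _ _ hsm).trans ?_
    apply Real.rpow_le_rpow_of_exponent_le (by norm_num)
    linarith
  have hmul : (2 : ℝ) ^ (δ / 2 * NN n) * (2 : ℝ) ^ (NN n / 2 - δ / 2 * NN n) = (2 : ℝ) ^ (NN n / 2) := by
    rw [← Real.rpow_add (by norm_num)]; congr 1; ring
  set X1 : Finset (Finset (V n)) :=
    ((cls n k).filter fun P => (#P : ℝ) ≤ (1 / 2 - δ) * NN n).biUnion fun P =>
      (univ.filter fun A : Finset (V n) => (#(A \ P) : ℝ) ≤ ε₁ * NN n).image fun A => A + A with hX1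
  set X2 : Finset (Finset (V n)) :=
    ((cls n k).filter fun P => (#(Qs (δ / 4) P) : ℝ) ≤ (1 / 2 - δ) * NN n).biUnion fun P =>
      (univ.filter fun A : Finset (V n) => (#(A \ Qs (δ / 4) P) : ℝ) ≤ ε₁ * NN n).image
        fun A => Aᶜ with hX2
  set X3 : Finset (Finset (V n)) :=
    (univ.filter fun u : V n => u ≠ 0).biUnion fun u =>
      univ.filter fun S : Finset (V n) => ∀ x, u ⬝ᵥ x = 0 → x ∈ S with hX3
  set X4 : Finset (Finset (V n)) :=
    ((univ : Finset (V n × V n)).filter fun p => p.1 ≠ 0 ∧ p.2 ≠ 0 ∧ p.1 ⬝ᵥ p.2 = 0).biUnion fun p =>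
      (univ.filter fun A : Finset (V n) => (#(A.filter fun y => p.1 ⬝ᵥ y = 0) : ℝ) ≤ c₀ * NN n ∧
      ∀ y ∈ A, y + p.2 ∉ A).image fun A => A + A with hX4
  have hB1 : (#X1 : ℝ) ≤ (2 : ℝ) ^ (NN n / 2) := by
    refine (card_biUnion_real _ _ ((2 : ℝ) ^ (NN n / 2 - δ / 2 * NN n)) ?_).trans ?_
    · intro P hP
      refine le_trans ?_ (hnear P (mem_filter.mp hP).2)
      exact_mod_cast card_image_le
    · rw [← hmul]
      apply mul_le_mul_of_nonneg_right _ (by positivity)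
      refine le_trans ?_ hcls
      exact_mod_cast card_filter_le _ _
  have hB2 : (#X2 : ℝ) ≤ (2 : ℝ) ^ (NN n / 2) := by
    refine (card_biUnion_real _ _ ((2 : ℝ) ^ (NN n / 2 - δ / 2 * NN n)) ?_).trans ?_
    · intro P hP
      refine le_trans ?_ (hnear (Qs (δ / 4) P) (mem_filter.mp hP).2)
      exact_mod_cast card_image_le
    · rw [← hmul]
      apply mul_le_mul_of_nonneg_right _ (by positivity)
      refine le_trans ?_ hcls
      exact_mod_cast card_filter_le _ _
  have hB3 : (#X3 : ℝ) ≤ NN n * (2 : ℝ) ^ (NN n / 2) := by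
    refine (card_biUnion_real _ _ ((2 : ℝ) ^ (NN n / 2)) ?_).trans ?_
    · intro u hu
      exact count_full (mem_filter.mp hu).2
    · apply mul_le_mul_of_nonneg_right _ (by positivity)
      exact card_le_NN _
  have hN2 : NN n = (2 : ℝ) ^ (n : ℝ) := by rw [Real.rpow_natCast]; rfl
  have hB4 : (#X4 : ℝ) ≤ (2 : ℝ) ^ (NN n / 2) := by
    refine (card_biUnion_real _ _ ((2 : ℝ) ^ (2 / 5 * NN n + 9 / 100 * NN n)) ?_).trans ?_
    · intro p hp
      obtain ⟨h1, h2, h3⟩ := (mem_filter.mp hp).2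
      refine le_trans ?_ (count_ext h1 h2 h3 _ _ hcount₀)
      exact_mod_cast card_image_le
    · have h1 : (#((univ : Finset (V n × V n)).filter
          fun p => p.1 ≠ 0 ∧ p.2 ≠ 0 ∧ p.1 ⬝ᵥ p.2 = 0) : ℝ) ≤ (2 : ℝ) ^ (n * 2 : ℝ) := by
        have h2 : #((univ : Finset (V n × V n)).filter
          fun p => p.1 ≠ 0 ∧ p.2 ≠ 0 ∧ p.1 ⬝ᵥ p.2 = 0) ≤ 2 ^ (n * 2) := by
          refine (card_filter_le _ _).trans ?_
          rw [card_univ, Fintype.card_prod, card_V, ← pow_add, mul_two]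
        have h3 : (2 : ℝ) ^ (n * 2 : ℝ) = (2 : ℝ) ^ (n * 2 : ℕ) := by
          rw [← Real.rpow_natCast]; push_cast; rfl
        rw [h3]
        exact_mod_cast h2
      refine (mul_le_mul_of_nonneg_right h1 (by positivity)).trans ?_
      rw [← Real.rpow_add (by norm_num)]
      apply Real.rpow_le_rpow_of_exponent_le (by norm_num)
      linarith
  have hcover : sumsets n ⊆ X1 ∪ X2 ∪ X3 ∪ X4 ∪ {∅} := by
    intro S hS
    obtain ⟨A, -, rfl⟩ := mem_image.mp hS
    set S := A + A with hSdef
    obtain ⟨P, hP, hAP, hTP⟩ := hk A Sᶜ (fun a ha b hb h => (mem_compl.mp h) (add_mem_add ha hb))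
    have hBQ := B_Qs (δ / 4) ε₁ (by positivity) P _ hTP
    by_cases hc1 : (#P : ℝ) ≤ (1 / 2 - δ) * NN n
    · have : S ∈ X1 := by
        rw [hX1, mem_biUnion]
        exact ⟨P, mem_filter.mpr ⟨hP, hc1⟩, mem_image.mpr ⟨A, mem_filter.mpr ⟨mem_univ _, hAP⟩, rfl⟩⟩
      simp only [mem_union, this, true_or]
    by_cases hc2 : (#(Qs (δ / 4) P) : ℝ) ≤ (1 / 2 - δ) * NN n
    · have : S ∈ X2 := by
        rw [hX2, mem_biUnion]
        exact ⟨P, mem_filter.mpr ⟨hP, hc2⟩, mem_image.mpr ⟨Sᶜ, mem_filter.mpr ⟨mem_univ _, hBQ⟩,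
          compl_compl S⟩⟩
      simp only [mem_union, this, true_or, or_true]
    obtain ⟨u, hu, c, hside⟩ := stability P (Qs (δ / 4) P) κ δ hκ0 hκ1 hδ (not_le.mp hc1).le
      (not_le.mp hc2).le (T_Qs (δ / 4) (by positivity) P)
    obtain ⟨A₁, hA₁, hA₁c⟩ := normalize_side A hu c
    have hsmall : (#(A₁.filter fun y => u ⬝ᵥ y = 0) : ℝ) ≤ c₀ * NN n := by
      rw [hA₁c]
      have h1 : #(A.filter fun y => u ⬝ᵥ y = c) ≤ #(P.filter fun y => u ⬝ᵥ y = c) + #(A \ P) := by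
        rw [← card_union_of_disjoint]
        · apply card_le_card
          intro y hy
          rw [mem_filter] at hy
          simp only [mem_union, mem_filter, mem_sdiff]
          by_cases hyP : y ∈ P
          · exact Or.inl ⟨hyP, hy.2⟩
          · exact Or.inr ⟨hy.1, hyP⟩
        · rw [disjoint_left]
          intro y hy hy'
          exact (mem_sdiff.mp hy').2 (mem_filter.mp hy).1
      have h2 : (#(A.filter fun y => u ⬝ᵥ y = c) : ℝ) ≤ #(P.filter fun y => u ⬝ᵥ y = c) + #(A \ P) := by
        exact_mod_cast h1
      nlinarith
    by_cases hfull : ∀ x, u ⬝ᵥ x = 0 → x ∈ S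
    · have : S ∈ X3 := by
        rw [hX3, mem_biUnion]
        exact ⟨u, mem_filter.mpr ⟨mem_univ _, hu⟩, mem_filter.mpr ⟨mem_univ _, hfull⟩⟩
      simp only [mem_union, this, true_or, or_true]
    push Not at hfull
    obtain ⟨x, hux, hxS⟩ := hfull
    by_cases hx0 : x = 0
    · have : S = ∅ := by
        rcases A.eq_empty_or_nonempty with rfl | ⟨a, ha⟩
        · simp [hSdef]
        · exfalso
          apply hxS
          rw [hx0, ← add_self' a]
          exact add_mem_add ha ha
      simp only [mem_union, mem_singleton, this, or_true]
    · have : S ∈ X4 := by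
        rw [hX4, mem_biUnion]
        refine ⟨(u, x), mem_filter.mpr ⟨mem_univ _, hu, hx0, hux⟩,
          mem_image.mpr ⟨A₁, mem_filter.mpr ⟨mem_univ _, hsmall, ?_⟩, hA₁⟩⟩
        intro y hy hyx
        apply hxS
        rw [hSdef, ← hA₁]
        have := add_mem_add hy hyx
        rwa [← add_assoc, add_self', zero_add] at this
      simp only [mem_union, this, true_or, or_true]
  have hcard : (#(sumsets n) : ℝ) ≤ #X1 + #X2 + #X3 + #X4 + 1 := by
    have h1 : #(sumsets n) ≤ #X1 + #X2 + #X3 + #X4 + 1 := by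
      refine (card_le_card hcover).trans ?_
      have a1 := card_union_le (X1 ∪ X2 ∪ X3 ∪ X4) {∅}
      have a2 := card_union_le (X1 ∪ X2 ∪ X3) X4
      have a3 := card_union_le (X1 ∪ X2) X3
      have a4 := card_union_le X1 X2
      rw [card_singleton] at a1
      omega
    exact_mod_cast h1
  have hone : (1 : ℝ) ≤ (2 : ℝ) ^ (NN n / 2) := Real.one_le_rpow (by norm_num) (by positivity)
  have hNone : (1 : ℝ) ≤ NN n := by unfold NN; exact one_le_pow₀ (by norm_num)
  rw [Real.rpow_add (by norm_num), Real.rpow_add (by norm_num), ← hN2]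
  have h8 : (2 : ℝ) ^ (3 : ℝ) = 8 := by norm_num
  rw [h8]
  nlinarith

end SC

/-- There is a constant `C > 0` with `|𝒮ₙ| ≤ 2^(2^(n−1) + n² + C)` for all `n ≥ 1`. -/
theorem sumset_count_upper :
    ∃ C : ℕ, 0 < C ∧ ∀ n : ℕ, 1 ≤ n →
      (sumsets n).card ≤ 2 ^ (2 ^ (n - 1) + n ^ 2 + C) := by
  obtain ⟨n₀, h⟩ := SC.main_large
  refine ⟨2 ^ n₀ + 3, by positivity, fun n hn => ?_⟩
  rcases lt_or_ge n n₀ with hlt | hge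
  · calc (sumsets n).card ≤ (Finset.univ : Finset (Finset (V n))).card :=
          Finset.card_le_card (Finset.subset_univ _)
      _ = 2 ^ (2 ^ n) := by rw [Finset.card_univ, Fintype.card_finset, SC.card_V]
      _ ≤ 2 ^ (2 ^ (n - 1) + n ^ 2 + (2 ^ n₀ + 3)) := by
          apply Nat.pow_le_pow_right (by norm_num)
          have : 2 ^ n ≤ 2 ^ n₀ := Nat.pow_le_pow_right (by norm_num) hlt.le
          linarith [Nat.zero_le (2 ^ (n - 1)), Nat.zero_le (n ^ 2)]
  · have h1 := h n hge hn
    have h2 : SC.NN n / 2 = ((2 ^ (n - 1) : ℕ) : ℝ) := by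
      obtain ⟨m, rfl⟩ : ∃ m, n = m + 1 := ⟨n - 1, by omega⟩
      unfold SC.NN
      rw [Nat.add_sub_cancel, pow_succ]; push_cast; ring
    have h3 : ((sumsets n).card : ℝ) ≤ (2 : ℝ) ^ (2 ^ (n - 1) + n + 3 : ℕ) := by
      rw [h2] at h1
      rw [← Real.rpow_natCast]
      refine h1.trans (le_of_eq ?_)
      push_cast; rfl
    have h4 : (sumsets n).card ≤ 2 ^ (2 ^ (n - 1) + n + 3) := by exact_mod_cast h3
    refine h4.trans ?_
    apply Nat.pow_le_pow_right (by norm_num)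
    have : n ≤ n ^ 2 := Nat.le_self_pow (by norm_num) n
    linarith [Nat.zero_le (2 ^ n₀)]
end

section
/- For all n ≥ 2, the number of sets in ℋₙ that are not sumsets satisfies |ℋₙ \ 𝒮ₙ| ≤ 2^(2n−1) · 3^(2^(n−2)). In particular, |ℋₙ \ 𝒮ₙ| = o(|ℋₙ|). -/
open Pointwise

/-- `v^⊥ = {x : ⟨x, v⟩ = 0}`. -/
def perp {n : ℕ} (v : V n) : Finset (V n) :=
  Finset.univ.filter (fun x => ∑ i, x i * v i = 0)

/-- `ℋₙ`: subsets of `F₂ⁿ` containing a complete linear subspace of co-dimension 1. -/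
def Hfam (n : ℕ) : Finset (Finset (V n)) :=
  Finset.univ.filter (fun S => ∃ v : V n, v ≠ 0 ∧ perp v ⊆ S)

def dt {n : ℕ} (v x : V n) : ZMod 2 := ∑ i, x i * v i

lemma dt_add {n : ℕ} (v x y : V n) : dt v (x + y) = dt v x + dt v y := by
  simp [dt, add_mul, Finset.sum_add_distrib]

lemma mem_perp {n : ℕ} (v x : V n) : x ∈ perp v ↔ dt v x = 0 := by
  simp [perp, dt]

lemma z2 (a : ZMod 2) (h : a ≠ 0) : a = 1 := by
  revert a; decide

lemma vadd_self {n : ℕ} (x : V n) : x + x = 0 := by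
  ext i; exact CharTwo.add_self_eq_zero (x i)

lemma vadd_cancel {n : ℕ} (x y : V n) : x + y + y = x := by
  rw [add_assoc, vadd_self, add_zero]

lemma exists_dt {n : ℕ} (v : V n) (hv : v ≠ 0) : ∃ w : V n, dt v w = 1 ∧ dt w v = 1 := by
  obtain ⟨i, hi⟩ := Function.ne_iff.mp hv
  refine ⟨Pi.single i 1, ?_, ?_⟩
  · simpa [dt, Pi.single_apply] using z2 _ hi
  · simpa [dt, Pi.single_apply] using z2 _ hi

lemma half {n : ℕ} (u t : V n) (ht : dt u t = 1) (P : Finset (V n))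
    (hP : ∀ x ∈ P, x + t ∈ P) :
    P.card = 2 * (P.filter (fun x => dt u x = 0)).card := by
  have h1 := Finset.card_filter_add_card_filter_not (s := P) (fun x => dt u x = 0)
  have h2 : (P.filter (fun x => ¬ dt u x = 0)).card = (P.filter (fun x => dt u x = 0)).card := by
    apply Finset.card_bij' (fun x _ => x + t) (fun x _ => x + t)
    · intro x hx
      rw [Finset.mem_filter] at hx ⊢
      refine ⟨hP _ hx.1, ?_⟩
      rw [dt_add, ht, z2 _ hx.2]; decide
    · intro x hx
      rw [Finset.mem_filter] at hx ⊢
      refine ⟨hP _ hx.1, ?_⟩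
      rw [dt_add, ht, hx.2]; decide
    · intro x _; exact vadd_cancel x t
    · intro x _; exact vadd_cancel x t
  omega

lemma card_V (n : ℕ) : (Finset.univ : Finset (V n)).card = 2 ^ n := by
  simp [Finset.card_univ, ZMod.card]

lemma card_perp {n : ℕ} (v : V n) (hv : v ≠ 0) : 2 ^ n = 2 * (perp v).card := by
  obtain ⟨w, hw, -⟩ := exists_dt v hv
  have := half v w hw Finset.univ (by simp)
  rw [card_V] at this
  exact this

def bad {n : ℕ} (v h : V n) : Finset (Finset (V n)) :=
  Finset.univ.filter (fun S => perp v ⊆ S ∧ ∀ x, x ∉ perp v → ¬ (x ∈ S ∧ x + h ∈ S))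

lemma card_bad {n : ℕ} (hn : 2 ≤ n) (v h : V n) (hv : v ≠ 0) (hh : h ≠ 0) (hp : h ∈ perp v) :
    (bad v h).card ≤ 3 ^ 2 ^ (n - 2) := by
  classical
  obtain ⟨u, -, hu⟩ := exists_dt h hh
  rw [mem_perp] at hp
  set C : Finset (V n) := (perp v)ᶜ with hC
  set K := C.filter (fun x => dt u x = 0) with hK
  have memC : ∀ x, x ∈ C ↔ dt v x ≠ 0 := by
    intro x; rw [hC, Finset.mem_compl, mem_perp]
  have hCh : ∀ x ∈ C, x + h ∈ C := by
    intro x hx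
    rw [memC] at hx ⊢
    rw [dt_add, hp, add_zero]; exact hx
  have h1 : C.card = 2 * K.card := half u h hu C hCh
  have h2 := card_perp v hv
  have h3 : C.card = 2 ^ n - (perp v).card := by
    rw [hC, Finset.card_compl, ← Finset.card_univ, card_V]
  have hKc : K.card = 2 ^ (n - 2) := by
    obtain ⟨k, rfl⟩ := Nat.exists_eq_add_of_le hn
    rw [pow_add] at h2 h3
    simp only [Nat.add_sub_cancel_left]
    omega
  let Q := {p : Bool × Bool // ¬ (p.1 = true ∧ p.2 = true)}
  have hQ : Fintype.card Q = 3 := by decide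
  let F : Finset (V n) → (K → Q) := fun S x =>
    if hx : (x.1 ∈ S ∧ x.1 + h ∈ S) then ⟨(false, false), by simp⟩
    else ⟨(decide (x.1 ∈ S), decide (x.1 + h ∈ S)), by simpa using hx⟩
  have hcard : (Finset.univ : Finset (K → Q)).card = 3 ^ 2 ^ (n - 2) := by
    rw [Finset.card_univ, Fintype.card_fun, hQ, Fintype.card_coe, hKc]
  rw [← hcard]
  apply Finset.card_le_card_of_injOn F (by simp)
  intro S hS T hT hST
  simp only [bad, Finset.coe_filter, Finset.mem_univ, true_and, Set.mem_ofPred_eq] at hS hT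
  have key : ∀ x ∈ K, (x ∈ S ↔ x ∈ T) ∧ (x + h ∈ S ↔ x + h ∈ T) := by
    intro x hx
    have hx' : x ∉ perp v := by
      have := (Finset.mem_filter.mp hx).1
      simpa [hC] using this
    have e := congrFun hST ⟨x, hx⟩
    simp only [F, dif_neg (hS.2 x hx'), dif_neg (hT.2 x hx')] at e
    have e' := congrArg Subtype.val e
    simpa using e'
  ext x
  by_cases hx : x ∈ perp v
  · exact ⟨fun _ => hT.1 hx, fun _ => hS.1 hx⟩
  · have hxC : x ∈ C := by rw [hC, Finset.mem_compl]; exact hx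
    by_cases hx0 : dt u x = 0
    · exact (key x (Finset.mem_filter.mpr ⟨hxC, hx0⟩)).1
    · have := (key (x + h) (Finset.mem_filter.mpr ⟨hCh x hxC, by
        rw [dt_add, hu, z2 _ hx0]; decide⟩)).2
      rwa [vadd_cancel] at this

lemma cover {n : ℕ} (S : Finset (V n)) (hS : S ∈ Hfam n \ sumsets n) :
    ∃ v : V n, v ≠ 0 ∧ ∃ h ∈ perp v, h ≠ 0 ∧ S ∈ bad v h := by
  classical
  rw [Finset.mem_sdiff] at hS
  obtain ⟨hH, hN⟩ := hS
  obtain ⟨v, hv, hvS⟩ := (Finset.mem_filter.mp hH).2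
  refine ⟨v, hv, ?_⟩
  by_contra hcon
  apply hN
  have hex : ∀ h ∈ perp v, h ≠ 0 → ∃ x, x ∉ perp v ∧ x ∈ S ∧ x + h ∈ S := by
    intro h hp h0
    by_contra hc
    apply hcon
    refine ⟨h, hp, h0, Finset.mem_filter.mpr ⟨Finset.mem_univ _, hvS, ?_⟩⟩
    intro x hx hxx
    exact hc ⟨x, hx, hxx⟩
  have h0p : (0 : V n) ∈ perp v := by simp [mem_perp, dt]
  refine Finset.mem_image.mpr ?_
  by_cases hT : S ⊆ perp v
  · have hSe : S = perp v := Finset.Subset.antisymm hT hvS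
    refine ⟨perp v, Finset.mem_univ _, ?_⟩
    rw [hSe]
    ext x
    simp only [Finset.mem_add]
    constructor
    · rintro ⟨a, ha, b, hb, rfl⟩
      rw [mem_perp] at *
      rw [dt_add, ha, hb, add_zero]
    · intro hx
      exact ⟨x, hx, 0, h0p, add_zero x⟩
  · refine ⟨insert 0 (S \ perp v), Finset.mem_univ _, ?_⟩
    have two : ∀ a b : V n, a ∉ perp v → b ∉ perp v → a + b ∈ perp v := by
      intro a b ha hb
      rw [mem_perp] at *
      rw [dt_add, z2 _ ha, z2 _ hb]; decide
    ext x
    simp only [Finset.mem_add]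
    constructor
    · rintro ⟨a, ha, b, hb, rfl⟩
      rw [Finset.mem_insert, Finset.mem_sdiff] at ha hb
      rcases ha with rfl | ha <;> rcases hb with rfl | hb
      · rw [add_zero]; exact hvS h0p
      · rw [zero_add]; exact hb.1
      · rw [add_zero]; exact ha.1
      · exact hvS (two _ _ ha.2 hb.2)
    · intro hx
      by_cases hxp : x ∈ perp v
      · by_cases hx0 : x = 0
        · exact ⟨0, by simp, 0, by simp, by simp [hx0]⟩
        · obtain ⟨y, hy, hyS, hyx⟩ := hex x hxp hx0
          refine ⟨y + x, ?_, y, ?_, ?_⟩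
          · refine Finset.mem_insert_of_mem (Finset.mem_sdiff.mpr ⟨hyx, ?_⟩)
            rw [mem_perp] at *
            rw [dt_add, hxp, add_zero]; exact hy
          · exact Finset.mem_insert_of_mem (Finset.mem_sdiff.mpr ⟨hyS, hy⟩)
          · rw [add_comm y x, vadd_cancel]
      · exact ⟨x, Finset.mem_insert_of_mem (Finset.mem_sdiff.mpr ⟨hx, hxp⟩), 0, by simp,
          add_zero x⟩

lemma upper (n : ℕ) (hn : 2 ≤ n) :
    (Hfam n \ sumsets n).card ≤ 2 ^ (2 * n - 1) * 3 ^ 2 ^ (n - 2) := by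
  classical
  have hsub : Hfam n \ sumsets n ⊆
      (Finset.univ.filter (fun v : V n => v ≠ 0)).biUnion
        (fun v => ((perp v).filter (fun h => h ≠ 0)).biUnion (fun h => bad v h)) := by
    intro S hS
    obtain ⟨v, hv, h, hp, h0, hb⟩ := cover S hS
    simp only [Finset.mem_biUnion, Finset.mem_filter, Finset.mem_univ, true_and]
    exact ⟨v, hv, h, ⟨hp, h0⟩, hb⟩
  have hperp : ∀ v : V n, v ≠ 0 → (perp v).card = 2 ^ (n - 1) := by
    intro v hv
    have := card_perp v hv
    obtain ⟨k, rfl⟩ := Nat.exists_eq_add_of_le (show 1 ≤ n by omega)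
    rw [pow_add] at this
    simp only [Nat.add_sub_cancel_left]
    omega
  refine (Finset.card_le_card hsub).trans ?_
  refine (Finset.card_biUnion_le_card_mul _ _ (2 ^ (n - 1) * 3 ^ 2 ^ (n - 2)) ?_).trans ?_
  · intro v hv
    have hv := (Finset.mem_filter.mp hv).2
    refine (Finset.card_biUnion_le_card_mul _ _ (3 ^ 2 ^ (n - 2)) ?_).trans ?_
    · intro h hh
      rw [Finset.mem_filter] at hh
      exact card_bad hn v h hv hh.2 hh.1
    · apply Nat.mul_le_mul_right
      rw [← hperp v hv]
      exact Finset.card_filter_le _ _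
  · rw [← mul_assoc]
    apply Nat.mul_le_mul_right
    have : 2 * n - 1 = n + (n - 1) := by omega
    rw [this, pow_add]
    apply Nat.mul_le_mul_right
    rw [← card_V n]
    exact Finset.card_filter_le _ _

lemma lower (k : ℕ) : 4 ^ 2 ^ k ≤ (Hfam (k + 2)).card := by
  classical
  let v : V (k + 2) := Pi.single 0 1
  have hv : v ≠ 0 := by
    intro h
    have := congrFun h 0
    simp [v] at this
  have h1 := card_perp v hv
  have h2 : Finset.Icc (perp v) Finset.univ ⊆ Hfam (k + 2) := by
    intro S hS
    rw [Finset.mem_Icc] at hS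
    exact Finset.mem_filter.mpr ⟨Finset.mem_univ _, v, hv, hS.1⟩
  have h3 := Finset.card_le_card h2
  rw [Finset.card_Icc_finset (Finset.subset_univ _), card_V] at h3
  have h4 : 2 ^ (k + 2) - (perp v).card = 2 * 2 ^ k := by
    rw [pow_add] at h1 ⊢; omega
  rw [h4, pow_mul] at h3
  exact h3

theorem Hfam_minus_sumsets_small :
    (∀ n : ℕ, 2 ≤ n →
      (Hfam n \ sumsets n).card ≤ 2 ^ (2 * n - 1) * 3 ^ 2 ^ (n - 2)) ∧
    (∀ ε : ℝ, 0 < ε → ∃ n₀ : ℕ, ∀ n : ℕ, n₀ ≤ n →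
      (((Hfam n \ sumsets n).card : ℝ)) ≤ ε * (Hfam n).card) := by
  refine ⟨upper, ?_⟩
  intro ε hε
  have ht := tendsto_pow_const_mul_const_pow_of_abs_lt_one 2 (r := (3 / 4 : ℝ))
    (by rw [abs_of_pos] <;> norm_num)
  have hev := ht.eventually (gt_mem_nhds (show (0 : ℝ) < ε / 8 by positivity))
  obtain ⟨M, hM⟩ := Filter.eventually_atTop.mp hev
  refine ⟨M + 2, ?_⟩
  intro n hn
  obtain ⟨k, rfl⟩ := Nat.exists_eq_add_of_le (show 2 ≤ n by omega)
  rw [add_comm 2 k] at *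
  have hu := upper (k + 2) (by omega)
  have hl := lower k
  have hk : M ≤ 2 ^ k := le_trans (by omega) (Nat.lt_two_pow_self (n := k)).le
  have hm := hM _ hk
  have e : 2 ^ (2 * (k + 2) - 1) = 8 * (2 ^ k) ^ 2 := by
    have : 2 * (k + 2) - 1 = 3 + k * 2 := by omega
    rw [this, pow_add, pow_mul]; norm_num
  rw [e, Nat.add_sub_cancel] at hu
  generalize 2 ^ k = m at *
  have hu' : (((Hfam (k + 2) \ sumsets (k + 2)).card : ℝ)) ≤ 8 * (m : ℝ) ^ 2 * 3 ^ m := by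
    exact_mod_cast hu
  have hl' : (4 : ℝ) ^ m ≤ (Hfam (k + 2)).card := by exact_mod_cast hl
  refine hu'.trans (le_trans ?_ (mul_le_mul_of_nonneg_left hl' hε.le))
  have h4 : (0 : ℝ) < 4 ^ m := by positivity
  rw [div_pow, ← mul_div_assoc, div_lt_iff₀ h4] at hm
  linarith
end
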